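/- Under (A1)–(A4), suppose x_1 ∈ RB and the algorithm is run with parameters η = ξ·ε/(2·G_f·G_g·√T) and ρ = ε/√T. If in addition √T ≥ 4·R·G_g/(ε·ξ), then the iterates satisfy cumulative constraint satisfaction: ∑_{t=1}^T g(x_t) ≤ 0. -/

import Mathlib

open scoped RealInnerProductSpace Classical

noncomputable def projBall {d : ℕ} (R : ℝ) (v : EuclideanSpace ℝ (Fin d)) :
    EuclideanSpace ℝ (Fin d) := (R / max R ‖v‖) • v

def IsSubgradAt {d : ℕ} (g : EuclideanSpace ℝ (Fin d) → ℝ)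
    (x s : EuclideanSpace ℝ (Fin d)) : Prop :=
  ∀ y, g x + ⟪s, y - x⟫ ≤ g y

/-!
Let `D t` be the distance from `x t` to the tightened set `X_ρ`. If `p` is the point of
`{g ≤ -ε}` nearest to a point `x` outside, then a nonnegative multiple of `x - p` is a subgradient
of `g` at `p`; it has norm at least `σ`, so `g` grows at rate at least `σ` from `p` to `x`, and by
convexity `σ * dist(x, X_ρ) ≤ [g x + ρ]_+`. The Polyak step projects onto a half-space containing
`X_ρ`. Applied to `x t` it shrinks `D t` by the factor `√γ`, thanks to this error bound; being
nonexpansive, it moves by at most `η * G_f` when applied to `y t` instead. Hence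
`D (t + 1) ≤ √γ * D t + η * G_f`, so `ξ * ∑ D t ≤ 2 * R + T * η * G_f`, and
`g (x t) ≤ -ρ + G_g * D t` turns this into the bound on `∑ g (x t)`.
-/

section Multiplier

variable {E : Type*} [AddCommGroup E] [Module ℝ E] {g : E → ℝ} {φ : E →ₗ[ℝ] ℝ} {τ c : ℝ}

lemma mul_le_add_of_convexOn_of_le_on_hyperplane (hg : ConvexOn ℝ Set.univ g)
    (hmin : ∀ z, φ z = τ → c ≤ g z) {z w : E} (hz : φ z < τ) (hw : τ < φ w) :
    (φ w - φ z) * c ≤ (φ w - τ) * g z + (τ - φ z) * g w := by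
  have hwz : 0 < φ w - φ z := by linarith
  set a := (φ w - τ) / (φ w - φ z) with ha
  set b := (τ - φ z) / (φ w - φ z) with hb
  have hcross : φ (a • z + b • w) = τ := by
    simp only [map_add, map_smul, smul_eq_mul, ha, hb]
    field_simp
    ring
  have hconv : g (a • z + b • w) ≤ a * g z + b * g w :=
    hg.2 (Set.mem_univ z) (Set.mem_univ w) (div_nonneg (by linarith) hwz.le)
      (div_nonneg (by linarith) hwz.le) (by rw [ha, hb]; field_simp; ring)
  calc (φ w - φ z) * c ≤ (φ w - φ z) * (a * g z + b * g w) := by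
        gcongr
        exact (hmin _ hcross).trans hconv
    _ = (φ w - τ) * g z + (τ - φ z) * g w := by
        rw [ha, hb]
        field_simp

-- The multiplier separates `0` and the slopes `(g z - c) / (φ z - τ)` over `φ z < τ` from the
-- slopes over `τ < φ z`.
lemma exists_multiplier_of_convexOn_of_le_on_halfspace (hg : ConvexOn ℝ Set.univ g)
    (hφ : φ ≠ 0) (hmin : ∀ z, τ ≤ φ z → c ≤ g z) :
    ∃ l, 0 ≤ l ∧ ∀ z, c + l * (φ z - τ) ≤ g z := by
  let slope (z : E) : ℝ := (g z - c) / (φ z - τ)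
  obtain ⟨w₀, hw₀⟩ := LinearMap.surjective hφ (τ + 1)
  have hseparated : ∀ a ∈ insert 0 (slope '' {z | φ z < τ}), ∀ b ∈ slope '' {w | τ < φ w},
      a ≤ b := by
    rintro _ (rfl | ⟨z, hz : φ z < τ, rfl⟩) _ ⟨w, hw : τ < φ w, rfl⟩
    · exact div_nonneg (sub_nonneg.2 (hmin w hw.le)) (sub_pos.2 hw).le
    · have hcross := mul_le_add_of_convexOn_of_le_on_hyperplane hg (fun v hv => hmin v hv.ge) hz hw
      rw [div_le_iff_of_neg (sub_neg.2 hz), div_mul_eq_mul_div, div_le_iff₀ (sub_pos.2 hw)]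
      linarith
  obtain ⟨l, hlower, hupper⟩ := exists_between_of_forall_le (Set.insert_nonempty _ _)
    (Set.Nonempty.image slope ⟨w₀, by simp [hw₀]⟩) hseparated
  refine ⟨l, hlower (Set.mem_insert _ _), fun z => ?_⟩
  rcases lt_trichotomy (φ z) τ with hz | hz | hz
  · have hslope := hlower (Set.mem_insert_of_mem _ ⟨z, hz, rfl⟩)
    rw [div_le_iff_of_neg (sub_neg.2 hz)] at hslope
    linarith
  · simpa [hz] using hmin z hz.ge
  · have hslope := hupper ⟨z, hz, rfl⟩
    rw [le_div_iff₀ (sub_pos.2 hz)] at hslope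
    linarith

end Multiplier

section Sublevel

variable {E : Type*} [NormedAddCommGroup E] [NormedSpace ℝ E] {g : E → ℝ} {x p : E} {b : ℝ}

-- `q` is the point of the segment from `p` to `x` at which the chord of `g` has height `b`.
lemma exists_le_and_mul_dist_eq_of_convexOn (hg : ConvexOn ℝ Set.univ g) (hpb : g p ≤ b)
    (hbx : b < g x) :
    ∃ q, g q ≤ b ∧ (g x - g p) * dist x q = (g x - b) * dist x p := by
  have hgap : 0 < g x - g p := by linarith
  set u := (b - g p) / (g x - g p) with hu
  have hu0 : 0 ≤ u := div_nonneg (by linarith) hgap.le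
  have hu1 : u ≤ 1 := by rw [hu, div_le_one hgap]; linarith
  refine ⟨AffineMap.lineMap p x u, ?_, ?_⟩
  · calc g (AffineMap.lineMap p x u) = g ((1 - u) • p + u • x) := by
          rw [AffineMap.lineMap_apply_module]
      _ ≤ (1 - u) * g p + u * g x :=
          hg.2 (Set.mem_univ p) (Set.mem_univ x) (sub_nonneg.2 hu1) hu0 (by ring)
      _ = b := by rw [hu]; field_simp; ring
  · rw [dist_right_lineMap, Real.norm_of_nonneg (sub_nonneg.2 hu1), dist_comm p x, hu]
    field_simp
    ring

lemma eq_of_infDist_sublevel_eq_dist (hg : ConvexOn ℝ Set.univ g) (hpb : g p ≤ b)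
    (hbx : b < g x) (hp : Metric.infDist x {z | g z ≤ b} = dist x p) : g p = b := by
  obtain ⟨q, hqb, hq⟩ := exists_le_and_mul_dist_eq_of_convexOn hg hpb hbx
  have hxp : 0 < dist x p := dist_pos.2 fun h => by rw [h] at hbx; linarith
  have hpq : dist x p ≤ dist x q := hp ▸ Metric.infDist_le_dist_of_mem hqb
  have hgap : (g x - g p) * dist x p ≤ (g x - b) * dist x p :=
    hq ▸ mul_le_mul_of_nonneg_left hpq (by linarith)
  linarith [le_of_mul_le_mul_right hgap hxp]

end Sublevel

section InnerProductSpace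

variable {E : Type*} [NormedAddCommGroup E] [InnerProductSpace ℝ E]

lemma inner_sub_sub_nonpos_of_infDist_eq_dist {K : Set E} (hK : Convex ℝ K) {x p : E}
    (hpK : p ∈ K) (hp : Metric.infDist x K = dist x p) : ∀ z ∈ K, ⟪x - p, z - p⟫ ≤ 0 := by
  refine (norm_eq_iInf_iff_real_inner_le_zero hK hpK).1 ?_
  simpa only [Metric.infDist_eq_iInf, dist_eq_norm] using hp.symm

lemma le_of_inner_nonneg_of_sublevel_subset_halfspace {g : E → ℝ} (hg : Continuous g) {n p z : E}
    (hn : n ≠ 0) (hp : ∀ w, g w ≤ g p → ⟪n, w - p⟫ ≤ 0) (hz : 0 ≤ ⟪n, z - p⟫) : g p ≤ g z := by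
  by_contra! hlt
  have hnear : ∀ᶠ r : ℝ in nhds 0, g (z + r • n) < g p :=
    ContinuousAt.eventually_lt (by fun_prop) continuousAt_const (by simpa using hlt)
  obtain ⟨r, hr, hr0 : 0 < r⟩ :=
    ((hnear.filter_mono nhdsWithin_le_nhds).and (self_mem_nhdsWithin (s := Set.Ioi 0))).exists
  have hmoved : ⟪n, z + r • n - p⟫ = ⟪n, z - p⟫ + r * ‖n‖ ^ 2 := by
    rw [add_sub_right_comm, inner_add_right, real_inner_smul_right, real_inner_self_eq_norm_sq]
  have hpos : 0 < r * ‖n‖ ^ 2 := by positivity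
  linarith [hp _ hr.le]

/-- The metric projection of `v` onto the half-space `{z | ⟪s, z⟫ + b ≤ 0}`; both the
feasibility step and `projBall` are instances of it. For `s = 0` division by zero makes it the
identity. -/
noncomputable def halfspaceProj (s : E) (b : ℝ) (v : E) : E :=
  v - (max (⟪s, v⟫ + b) 0 / ‖s‖ ^ 2) • s

variable {s p : E} {b : ℝ}

lemma halfspaceProj_of_mem (hp : ⟪s, p⟫ + b ≤ 0) : halfspaceProj s b p = p := by
  simp [halfspaceProj, max_eq_right hp]

lemma sq_max_sub_max_le_norm_sq_mul (s : E) (b : ℝ) (v w : E) :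
    (max (⟪s, v⟫ + b) 0 - max (⟪s, w⟫ + b) 0) ^ 2
      ≤ ‖s‖ ^ 2 * (‖v - w‖ ^ 2 - ‖halfspaceProj s b v - halfspaceProj s b w‖ ^ 2) := by
  rcases eq_or_ne s 0 with rfl | hs
  · simp
  set m := max (⟪s, v⟫ + b) 0 - max (⟪s, w⟫ + b) 0 with hm
  have hdiff : halfspaceProj s b v - halfspaceProj s b w = (v - w) - (m / ‖s‖ ^ 2) • s := by
    rw [halfspaceProj, halfspaceProj, hm, sub_div, sub_smul]
    abel
  have hm_sq : m ^ 2 ≤ m * ⟪v - w, s⟫ := by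
    rw [real_inner_comm, inner_sub_right, hm]
    rcases max_cases (⟪s, v⟫ + b) 0 with h | h <;> rcases max_cases (⟪s, w⟫ + b) 0 with h' | h' <;>
      rw [h.1, h'.1] <;> nlinarith [h.2, h'.2]
  calc m ^ 2 ≤ 2 * (m * ⟪v - w, s⟫) - m ^ 2 := by linarith
    _ = ‖s‖ ^ 2 * (‖v - w‖ ^ 2 - ‖halfspaceProj s b v - halfspaceProj s b w‖ ^ 2) := by
        rw [hdiff, norm_sub_sq_real (v - w), norm_smul, real_inner_smul_right, mul_pow,
          Real.norm_eq_abs, sq_abs]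
        field_simp
        ring

lemma norm_halfspaceProj_sub_halfspaceProj_le (s : E) (b : ℝ) (v w : E) :
    ‖halfspaceProj s b v - halfspaceProj s b w‖ ≤ ‖v - w‖ := by
  rcases eq_or_ne s 0 with rfl | hs
  · simp [halfspaceProj]
  have hfirm := (sq_nonneg _).trans (sq_max_sub_max_le_norm_sq_mul s b v w)
  have hs0 : 0 < ‖s‖ ^ 2 := by positivity
  exact le_of_sq_le_sq (sub_nonneg.1 (nonneg_of_mul_nonneg_right hfirm hs0)) (norm_nonneg _)

lemma norm_halfspaceProj_sub_le (hp : ⟪s, p⟫ + b ≤ 0) (v : E) :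
    ‖halfspaceProj s b v - p‖ ≤ ‖v - p‖ := by
  simpa only [halfspaceProj_of_mem hp] using norm_halfspaceProj_sub_halfspaceProj_le s b v p

lemma norm_halfspaceProj_sub_le_sqrt_mul {σ G : ℝ} (hG : 0 < G) (hσ : 0 ≤ σ) (hsG : ‖s‖ ≤ G)
    (hp : ⟪s, p⟫ + b ≤ 0) {v : E} (hv : σ * ‖v - p‖ ≤ max (⟪s, v⟫ + b) 0) :
    ‖halfspaceProj s b v - p‖ ≤ √(1 - σ ^ 2 / G ^ 2) * ‖v - p‖ := by
  have hcloser : 0 ≤ ‖v - p‖ ^ 2 - ‖halfspaceProj s b v - p‖ ^ 2 :=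
    sub_nonneg.2 (pow_le_pow_left₀ (norm_nonneg _) (norm_halfspaceProj_sub_le hp v) 2)
  have hpolyak := sq_max_sub_max_le_norm_sq_mul s b v p
  rw [max_eq_right hp, sub_zero, halfspaceProj_of_mem hp] at hpolyak
  have hdecrease : (σ * ‖v - p‖) ^ 2
      ≤ G ^ 2 * (‖v - p‖ ^ 2 - ‖halfspaceProj s b v - p‖ ^ 2) :=
    calc (σ * ‖v - p‖) ^ 2 ≤ (max (⟪s, v⟫ + b) 0) ^ 2 := by gcongr
      _ ≤ ‖s‖ ^ 2 * (‖v - p‖ ^ 2 - ‖halfspaceProj s b v - p‖ ^ 2) := hpolyak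
      _ ≤ G ^ 2 * (‖v - p‖ ^ 2 - ‖halfspaceProj s b v - p‖ ^ 2) := by gcongr
  rw [← Real.sqrt_sq (norm_nonneg (v - p)), ← Real.sqrt_mul' _ (sq_nonneg _)]
  refine Real.le_sqrt_of_sq_le ?_
  rw [← mul_le_mul_iff_right₀ (pow_pos hG 2)]
  calc G ^ 2 * ‖halfspaceProj s b v - p‖ ^ 2 ≤ G ^ 2 * ‖v - p‖ ^ 2 - (σ * ‖v - p‖) ^ 2 := by
        linarith
    _ = G ^ 2 * ((1 - σ ^ 2 / G ^ 2) * ‖v - p‖ ^ 2) := by field_simp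

end InnerProductSpace

section ProjBall

variable {d : ℕ} {R : ℝ}

lemma norm_projBall_le (hR : 0 < R) (v : EuclideanSpace ℝ (Fin d)) : ‖projBall R v‖ ≤ R := by
  have hmax : 0 < max R ‖v‖ := lt_max_of_lt_left hR
  rw [projBall, norm_smul, Real.norm_of_nonneg (by positivity), div_mul_eq_mul_div,
    div_le_iff₀ hmax]
  gcongr
  exact le_max_right _ _

-- For `R < ‖v‖` the half-space is the one supporting the ball at `(R / ‖v‖) • v`.
lemma projBall_eq_halfspaceProj (hR : 0 < R) (v : EuclideanSpace ℝ (Fin d)) :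
    projBall R v = halfspaceProj v (-(R * ‖v‖)) v := by
  have hinner : ⟪v, v⟫ + -(R * ‖v‖) = (‖v‖ - R) * ‖v‖ := by
    rw [real_inner_self_eq_norm_sq]
    ring
  rcases le_or_gt ‖v‖ R with hv | hv
  · rw [halfspaceProj_of_mem, projBall, max_eq_left hv, div_self hR.ne', one_smul]
    rw [hinner]
    exact mul_nonpos_of_nonpos_of_nonneg (sub_nonpos.2 hv) (norm_nonneg v)
  · have hv0 : 0 < ‖v‖ := hR.trans hv
    rw [projBall, halfspaceProj, hinner, max_eq_right hv.le,
      max_eq_left (mul_nonneg (sub_pos.2 hv).le hv0.le)]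
    match_scalars
    field_simp
    ring

lemma norm_projBall_sub_le (hR : 0 < R) (v : EuclideanSpace ℝ (Fin d))
    {p : EuclideanSpace ℝ (Fin d)} (hp : ‖p‖ ≤ R) : ‖projBall R v - p‖ ≤ ‖v - p‖ := by
  rw [projBall_eq_halfspaceProj hR]
  refine norm_halfspaceProj_sub_le ?_ v
  have hcauchy : ⟪v, p⟫ ≤ ‖v‖ * R := (real_inner_le_norm v p).trans (by gcongr)
  linarith

end ProjBall

section ErrorBound

variable {d : ℕ} {g : EuclideanSpace ℝ (Fin d) → ℝ} {x p s : EuclideanSpace ℝ (Fin d)}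

lemma continuous_of_convexOn_univ {E : Type*} [NormedAddCommGroup E] [NormedSpace ℝ E]
    [FiniteDimensional ℝ E] {f : E → ℝ} (hf : ConvexOn ℝ Set.univ f) : Continuous f :=
  continuousOn_univ.1 (hf.continuousOn isOpen_univ)

lemma exists_infDist_sublevel_eq_dist (hg : ConvexOn ℝ Set.univ g) {b : ℝ} (hb : ∃ z, g z ≤ b)
    (x : EuclideanSpace ℝ (Fin d)) :
    ∃ p, g p ≤ b ∧ Metric.infDist x {z | g z ≤ b} = dist x p :=
  (isClosed_le (continuous_of_convexOn_univ hg) continuous_const).exists_infDist_eq_dist hb x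

lemma exists_isSubgradAt_smul_sub_of_infDist_eq_dist (hg : ConvexOn ℝ Set.univ g) (hxp : x ≠ p)
    (hp : Metric.infDist x {z | g z ≤ g p} = dist x p) :
    ∃ l : ℝ, 0 ≤ l ∧ IsSubgradAt g p (l • (x - p)) := by
  have hxp0 : x - p ≠ 0 := sub_ne_zero.2 hxp
  have hconvex : Convex ℝ {z | g z ≤ g p} := by simpa using hg.convex_le (g p)
  have hsublevel : ∀ z, g z ≤ g p → ⟪x - p, z - p⟫ ≤ 0 :=
    inner_sub_sub_nonpos_of_infDist_eq_dist hconvex (le_refl (g p)) hp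
  have hhalfspace : ∀ z, ⟪x - p, p⟫ ≤ innerₗ _ (x - p) z → g p ≤ g z := fun z hz =>
    le_of_inner_nonneg_of_sublevel_subset_halfspace (continuous_of_convexOn_univ hg) hxp0 hsublevel
      (by rw [inner_sub_right]; exact sub_nonneg.2 hz)
  have hfunctional : innerₗ _ (x - p) ≠ 0 := fun h =>
    hxp0 (inner_self_eq_zero.1 (DFunLike.congr_fun h (x - p)))
  obtain ⟨l, hl0, hl⟩ := exists_multiplier_of_convexOn_of_le_on_halfspace hg hfunctional hhalfspace
  refine ⟨l, hl0, fun z => ?_⟩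
  rw [real_inner_smul_left, inner_sub_right]
  exact hl z

lemma mul_dist_le_sub_of_infDist_eq_dist {σ : ℝ} (hg : ConvexOn ℝ Set.univ g)
    (hσ : ∀ s, IsSubgradAt g p s → σ ≤ ‖s‖)
    (hp : Metric.infDist x {z | g z ≤ g p} = dist x p) : σ * dist x p ≤ g x - g p := by
  rcases eq_or_ne x p with rfl | hxp
  · simp
  obtain ⟨l, hl0, hl⟩ := exists_isSubgradAt_smul_sub_of_infDist_eq_dist hg hxp hp
  calc σ * dist x p ≤ ‖l • (x - p)‖ * ‖x - p‖ := by
        rw [dist_eq_norm]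
        gcongr
        exact hσ _ hl
    _ = ⟪l • (x - p), x - p⟫ := by
        rw [norm_smul, Real.norm_of_nonneg hl0, real_inner_smul_left, real_inner_self_eq_norm_sq]
        ring
    _ ≤ g x - g p := by linarith [hl x]

lemma mul_infDist_sublevel_le_max {σ a b : ℝ} (hg : ConvexOn ℝ Set.univ g) (hab : a ≤ b)
    (ha : ∃ z, g z = a) (hσ0 : 0 ≤ σ) (hσ : ∀ z, g z = a → ∀ s, IsSubgradAt g z s → σ ≤ ‖s‖)
    (x : EuclideanSpace ℝ (Fin d)) :
    σ * Metric.infDist x {z | g z ≤ b} ≤ max (g x - b) 0 := by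
  rcases le_or_gt (g x) b with hxb | hbx
  · rw [Metric.infDist_zero_of_mem (show x ∈ {z | g z ≤ b} from hxb), mul_zero]
    exact le_max_right _ _
  obtain ⟨p, hpa, hp⟩ := exists_infDist_sublevel_eq_dist hg (ha.imp fun _ => le_of_eq) x
  obtain rfl : g p = a := eq_of_infDist_sublevel_eq_dist hg hpa (hab.trans_lt hbx) hp
  obtain ⟨q, hqb, hq⟩ := exists_le_and_mul_dist_eq_of_convexOn hg hab hbx
  have hgap : 0 < g x - g p := by linarith
  have hgrowth : σ * dist x p ≤ g x - g p := mul_dist_le_sub_of_infDist_eq_dist hg (hσ p rfl) hp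
  have hscaled : (g x - g p) * (σ * dist x q) ≤ (g x - g p) * (g x - b) :=
    calc (g x - g p) * (σ * dist x q) = (g x - b) * (σ * dist x p) := by linear_combination σ * hq
      _ ≤ (g x - b) * (g x - g p) := mul_le_mul_of_nonneg_left hgrowth (by linarith)
      _ = (g x - g p) * (g x - b) := mul_comm _ _
  calc σ * Metric.infDist x {z | g z ≤ b} ≤ σ * dist x q := by
        gcongr
        exact Metric.infDist_le_dist_of_mem hqb
    _ ≤ g x - b := le_of_mul_le_mul_left hscaled hgap
    _ ≤ max (g x - b) 0 := le_max_left _ _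

lemma IsSubgradAt.le_add_mul_infDist {b G : ℝ} (hs : IsSubgradAt g x s)
    (hg : ConvexOn ℝ Set.univ g) (hb : ∃ z, g z ≤ b) (hsG : ‖s‖ ≤ G) :
    g x ≤ b + G * Metric.infDist x {z | g z ≤ b} := by
  obtain ⟨p, hpb, hp⟩ := exists_infDist_sublevel_eq_dist hg hb x
  have hinner : ⟪s, x - p⟫ ≤ G * ‖x - p‖ := (real_inner_le_norm s _).trans (by gcongr)
  have hsub := hs p
  rw [← neg_sub x p, inner_neg_right] at hsub
  rw [hp, dist_eq_norm]
  linarith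

lemma sum_le_card_mul_add_mul_sum_infDist {ι : Type*} {A : Finset ι} {b G : ℝ}
    {x s : ι → EuclideanSpace ℝ (Fin d)} (hg : ConvexOn ℝ Set.univ g) (hb : ∃ z, g z ≤ b)
    (hs : ∀ t ∈ A, IsSubgradAt g (x t) (s t)) (hsG : ∀ t ∈ A, ‖s t‖ ≤ G) :
    ∑ t ∈ A, g (x t) ≤ A.card * b + G * ∑ t ∈ A, Metric.infDist (x t) {z | g z ≤ b} := by
  calc ∑ t ∈ A, g (x t) ≤ ∑ t ∈ A, (b + G * Metric.infDist (x t) {z | g z ≤ b}) :=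
        Finset.sum_le_sum fun t ht => (hs t ht).le_add_mul_infDist hg hb (hsG t ht)
    _ = A.card * b + G * ∑ t ∈ A, Metric.infDist (x t) {z | g z ≤ b} := by
        rw [Finset.sum_add_distrib, ← Finset.mul_sum, Finset.sum_const, nsmul_eq_mul]

end ErrorBound

lemma mul_sum_add_le_of_forall_succ_le {D : ℕ → ℝ} {k δ : ℝ} :
    ∀ {T : ℕ}, (∀ t ∈ Finset.Icc 1 T, D (t + 1) ≤ k * D t + δ) →
      (1 - k) * ∑ t ∈ Finset.Icc 1 T, D t + D (T + 1) ≤ D 1 + T * δ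
  | 0, _ => by simp
  | T + 1, h => by
    have ih := mul_sum_add_le_of_forall_succ_le (T := T) fun t ht =>
      h t (Finset.Icc_subset_Icc_right T.le_succ ht)
    have hlast := h (T + 1) (by simp)
    rw [Finset.sum_Icc_succ_top (by omega)]
    push_cast
    linarith

lemma one_sub_sqrt_one_sub_sq_div_sq_pos {σ G : ℝ} (hσ : 0 < σ) (hG : 0 < G) :
    0 < 1 - √(1 - σ ^ 2 / G ^ 2) := by
  refine sub_pos.2 ((Real.sqrt_lt' one_pos).2 ?_)
  rw [one_pow]
  exact sub_lt_self 1 (by positivity)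

section PolyakStep

variable {d : ℕ} {g : EuclideanSpace ℝ (Fin d) → ℝ} {R ρ σ G : ℝ}

/-- One feasibility step of the algorithm: project `y` onto the half-space on which the
linearization of `g` at `x` with slope `s` is at most `-ρ`, then onto the ball of radius `R`. -/
noncomputable def polyakStep (g : EuclideanSpace ℝ (Fin d) → ℝ) (R ρ : ℝ)
    (x s y : EuclideanSpace ℝ (Fin d)) : EuclideanSpace ℝ (Fin d) :=
  projBall R (halfspaceProj s (g x - ⟪s, x⟫ + ρ) y)

lemma polyakStep_eq_ite (g : EuclideanSpace ℝ (Fin d) → ℝ) (R ρ : ℝ)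
    (x s y : EuclideanSpace ℝ (Fin d)) :
    polyakStep g R ρ x s y = if s ≠ 0 then
        projBall R (y - ((max (g x + ⟪s, y - x⟫ + ρ) 0) / ‖s‖ ^ 2) • s)
      else projBall R y := by
  have hlin : ⟪s, y⟫ + (g x - ⟪s, x⟫ + ρ) = g x + ⟪s, y - x⟫ + ρ := by
    rw [inner_sub_right]
    ring
  rw [polyakStep, halfspaceProj, hlin]
  split_ifs with hs
  · rfl
  · simp [not_not.1 hs]

lemma infDist_polyakStep_le {x s y : EuclideanSpace ℝ (Fin d)} (hg : ConvexOn ℝ Set.univ g)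
    (hR : 0 < R) (hG : 0 < G) (hσ : 0 ≤ σ) (hne : ∃ z, g z ≤ -ρ)
    (hball : ∀ z, g z ≤ -ρ → ‖z‖ ≤ R) (hs : IsSubgradAt g x s) (hsG : ‖s‖ ≤ G)
    (herr : σ * Metric.infDist x {z | g z ≤ -ρ} ≤ max (g x + ρ) 0) :
    Metric.infDist (polyakStep g R ρ x s y) {z | g z ≤ -ρ}
      ≤ √(1 - σ ^ 2 / G ^ 2) * Metric.infDist x {z | g z ≤ -ρ} + ‖y - x‖ := by
  obtain ⟨p, hpρ, hp⟩ := exists_infDist_sublevel_eq_dist hg hne x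
  rw [hp, dist_eq_norm] at herr ⊢
  set b := g x - ⟪s, x⟫ + ρ with hb
  have hpb : ⟪s, p⟫ + b ≤ 0 := by
    have hsub := hs p
    rw [inner_sub_right] at hsub
    linarith
  have hxb : ⟪s, x⟫ + b = g x + ρ := by rw [hb]; ring
  calc Metric.infDist (polyakStep g R ρ x s y) {z | g z ≤ -ρ} ≤ ‖polyakStep g R ρ x s y - p‖ := by
        rw [← dist_eq_norm]
        exact Metric.infDist_le_dist_of_mem hpρ
    _ ≤ ‖halfspaceProj s b y - p‖ := norm_projBall_sub_le hR _ (hball p hpρ)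
    _ ≤ ‖halfspaceProj s b x - p‖ + ‖halfspaceProj s b y - halfspaceProj s b x‖ := by
        rw [add_comm]
        exact norm_sub_le_norm_sub_add_norm_sub _ _ _
    _ ≤ √(1 - σ ^ 2 / G ^ 2) * ‖x - p‖ + ‖y - x‖ :=
        add_le_add (norm_halfspaceProj_sub_le_sqrt_mul hG hσ hsG hpb (by rwa [hxb]))
          (norm_halfspaceProj_sub_halfspaceProj_le s b y x)

variable {T : ℕ} {x s y : ℕ → EuclideanSpace ℝ (Fin d)} {δ : ℝ}

lemma norm_le_of_polyakStep (hR : 0 < R) (hx1 : ‖x 1‖ ≤ R)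
    (hstep : ∀ t ∈ Finset.Icc 1 T, x (t + 1) = polyakStep g R ρ (x t) (s t) (y t)) :
    ∀ t ∈ Finset.Icc 1 T, ‖x t‖ ≤ R := by
  intro t ht
  obtain ⟨ht1, htT⟩ := Finset.mem_Icc.1 ht
  obtain rfl | ⟨n, hn, rfl⟩ : t = 1 ∨ ∃ n, 1 ≤ n ∧ t = n + 1 := by
    rcases ht1.eq_or_lt with h | h
    · exact .inl h.symm
    · exact .inr ⟨t - 1, by omega, by omega⟩
  · exact hx1
  · rw [hstep n (Finset.mem_Icc.2 ⟨hn, by omega⟩)]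
    exact norm_projBall_le hR _

lemma mul_sum_infDist_le_of_polyakStep (hg : ConvexOn ℝ Set.univ g) (hR : 0 < R) (hG : 0 < G)
    (hσ : 0 ≤ σ) (hne : ∃ z, g z ≤ -ρ) (hball : ∀ z, g z ≤ -ρ → ‖z‖ ≤ R)
    (herr : ∀ z, σ * Metric.infDist z {z | g z ≤ -ρ} ≤ max (g z + ρ) 0) (hx1 : ‖x 1‖ ≤ R)
    (hs : ∀ t ∈ Finset.Icc 1 T, IsSubgradAt g (x t) (s t)) (hsG : ∀ t ∈ Finset.Icc 1 T, ‖s t‖ ≤ G)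
    (hyx : ∀ t ∈ Finset.Icc 1 T, ‖y t - x t‖ ≤ δ)
    (hstep : ∀ t ∈ Finset.Icc 1 T, x (t + 1) = polyakStep g R ρ (x t) (s t) (y t)) :
    (1 - √(1 - σ ^ 2 / G ^ 2)) * ∑ t ∈ Finset.Icc 1 T, Metric.infDist (x t) {z | g z ≤ -ρ}
      ≤ 2 * R + T * δ := by
  set D : ℕ → ℝ := fun t => Metric.infDist (x t) {z | g z ≤ -ρ} with hD
  have hrec : ∀ t ∈ Finset.Icc 1 T, D (t + 1) ≤ √(1 - σ ^ 2 / G ^ 2) * D t + δ := by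
    intro t ht
    simp only [hD]
    rw [hstep t ht]
    exact (infDist_polyakStep_le hg hR hG hσ hne hball (hs t ht) (hsG t ht) (herr _)).trans
      (add_le_add_right (hyx t ht) _)
  have hinit : D 1 ≤ 2 * R := by
    obtain ⟨p, hp⟩ := hne
    calc D 1 ≤ ‖x 1 - p‖ := by
          rw [← dist_eq_norm]
          exact Metric.infDist_le_dist_of_mem hp
      _ ≤ ‖x 1‖ + ‖p‖ := norm_sub_le _ _
      _ ≤ 2 * R := by linarith [hball p hp]
  have hlast : 0 ≤ D (T + 1) := Metric.infDist_nonneg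
  linarith [mul_sum_add_le_of_forall_succ_le hrec]

lemma mul_sum_le_of_polyakStep {ε : ℝ} (hg : ConvexOn ℝ Set.univ g) (hR : 0 < R) (hG : 0 < G)
    (hσ : 0 < σ) (hρ : 0 ≤ ρ) (hρε : ρ ≤ ε) (hball : {z | g z ≤ 0} ⊆ Metric.closedBall 0 R)
    (hsubgrad : ∀ z ∈ Metric.closedBall 0 R, ∀ u, IsSubgradAt g z u → ‖u‖ ≤ G)
    (hne : ∃ z, g z = -ε) (hsharp : ∀ z, g z = -ε → ∀ u, IsSubgradAt g z u → σ ≤ ‖u‖)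
    (hx1 : ‖x 1‖ ≤ R) (hs : ∀ t ∈ Finset.Icc 1 T, IsSubgradAt g (x t) (s t))
    (hyx : ∀ t ∈ Finset.Icc 1 T, ‖y t - x t‖ ≤ δ)
    (hstep : ∀ t ∈ Finset.Icc 1 T, x (t + 1) = polyakStep g R ρ (x t) (s t) (y t)) :
    (1 - √(1 - σ ^ 2 / G ^ 2)) * ∑ t ∈ Finset.Icc 1 T, g (x t)
      ≤ G * (2 * R + T * δ) - (1 - √(1 - σ ^ 2 / G ^ 2)) * (T * ρ) := by
  have hsG : ∀ t ∈ Finset.Icc 1 T, ‖s t‖ ≤ G := fun t ht =>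
    hsubgrad _ (by simpa using norm_le_of_polyakStep hR hx1 hstep t ht) _ (hs t ht)
  have hneρ : ∃ z, g z ≤ -ρ := hne.imp fun z hz => by linarith
  have hballρ : ∀ z, g z ≤ -ρ → ‖z‖ ≤ R := fun z hz => by
    simpa using hball (show g z ≤ 0 by linarith)
  have herr : ∀ z, σ * Metric.infDist z {z | g z ≤ -ρ} ≤ max (g z + ρ) 0 := fun z => by
    simpa using mul_infDist_sublevel_le_max hg (neg_le_neg hρε) hne hσ.le hsharp z
  have hdist :=
    mul_sum_infDist_le_of_polyakStep hg hR hG hσ.le hneρ hballρ herr hx1 hs hsG hyx hstep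
  have hsum := sum_le_card_mul_add_mul_sum_infDist hg hneρ hs hsG
  rw [Nat.card_Icc, Nat.add_sub_cancel] at hsum
  have hξ : 0 < 1 - √(1 - σ ^ 2 / G ^ 2) := one_sub_sqrt_one_sub_sq_div_sq_pos hσ hG
  set ξ := 1 - √(1 - σ ^ 2 / G ^ 2)
  set S := ∑ t ∈ Finset.Icc 1 T, Metric.infDist (x t) {z | g z ≤ -ρ}
  calc ξ * ∑ t ∈ Finset.Icc 1 T, g (x t) ≤ ξ * (T * -ρ + G * S) := by gcongr
    _ = G * (ξ * S) - ξ * (T * ρ) := by ring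
    _ ≤ G * (2 * R + T * δ) - ξ * (T * ρ) := by gcongr

end PolyakStep

lemma initial_add_drift_le_tightening {R F G ε ξ r : ℝ} (hF : 0 < F) (hG : 0 < G) (hε : 0 < ε)
    (hξ : 0 < ξ) (hr : 0 < r) (hlarge : 4 * R * G / (ε * ξ) ≤ r) :
    G * (2 * R + r ^ 2 * (ξ * ε / (2 * F * G * r) * F)) ≤ ξ * (r ^ 2 * (ε / r)) := by
  rw [div_le_iff₀ (by positivity)] at hlarge
  calc G * (2 * R + r ^ 2 * (ξ * ε / (2 * F * G * r) * F)) = (4 * R * G + r * (ε * ξ)) / 2 := by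
        field_simp
        ring
    _ ≤ r * (ε * ξ) := by linarith
    _ = ξ * (r ^ 2 * (ε / r)) := by field_simp

theorem stmt6_general {d T : ℕ}
    {R Gf Gg ε σ η ρ : ℝ}
    (g : EuclideanSpace ℝ (Fin d) → ℝ)
    (v : ℕ → EuclideanSpace ℝ (Fin d) → EuclideanSpace ℝ (Fin d))
    (x y s : ℕ → EuclideanSpace ℝ (Fin d))
    (hR : 0 < R) (hGf : 0 < Gf) (hGg : 0 < Gg)
    (hgconv : ConvexOn ℝ Set.univ g)
    (hA1 : {z : EuclideanSpace ℝ (Fin d) | g z ≤ 0} ⊆ Metric.closedBall 0 R)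
    (hA2 : ∀ t ∈ Finset.Icc 1 T, ∀ z ∈ Metric.closedBall (0 : EuclideanSpace ℝ (Fin d)) R,
      ‖v t z‖ ≤ Gf)
    (hA3 : ∀ z ∈ Metric.closedBall (0 : EuclideanSpace ℝ (Fin d)) R,
      ∀ sz, IsSubgradAt g z sz → ‖sz‖ ≤ Gg)
    (hσ : 0 < σ) (hε : 0 < ε)
    (hA4ne : ∃ z, g z = -ε)
    (hA4 : ∀ z : EuclideanSpace ℝ (Fin d), g z = -ε → ∀ sz, IsSubgradAt g z sz → σ ≤ ‖sz‖)
    (hx1 : x 1 ∈ Metric.closedBall (0 : EuclideanSpace ℝ (Fin d)) R)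
    (hηdef : η = (1 - Real.sqrt (1 - σ ^ 2 / Gg ^ 2)) * ε / (2 * Gf * Gg * Real.sqrt T))
    (hρdef : ρ = ε / Real.sqrt T)
    (hTlarge : 4 * R * Gg / (ε * (1 - Real.sqrt (1 - σ ^ 2 / Gg ^ 2))) ≤ Real.sqrt T)
    (hs : ∀ t ∈ Finset.Icc 1 T, IsSubgradAt g (x t) (s t))
    (hy : ∀ t ∈ Finset.Icc 1 T, y t = x t - η • v t (x t))
    (hupd : ∀ t ∈ Finset.Icc 1 T,
      x (t + 1) = if s t ≠ 0 then
          projBall R (y t - ((max (g (x t) + ⟪s t, y t - x t⟫ + ρ) 0) / ‖s t‖ ^ 2) • s t)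
        else projBall R (y t)) :
    ∑ t ∈ Finset.Icc 1 T, g (x t) ≤ 0 := by
  have hξ : 0 < 1 - √(1 - σ ^ 2 / Gg ^ 2) := one_sub_sqrt_one_sub_sq_div_sq_pos hσ hGg
  have hrT : 0 < √(T : ℝ) := lt_of_lt_of_le (by positivity) hTlarge
  have hT1 : 1 ≤ √(T : ℝ) :=
    Real.one_le_sqrt.2 (mod_cast Nat.pos_of_ne_zero fun h => by simp [h] at hrT)
  have hη : 0 ≤ η := by rw [hηdef]; positivity
  have hρ : 0 ≤ ρ := by rw [hρdef]; positivity
  have hρε : ρ ≤ ε := by rw [hρdef]; exact div_le_self hε.le hT1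
  have hstep : ∀ t ∈ Finset.Icc 1 T, x (t + 1) = polyakStep g R ρ (x t) (s t) (y t) :=
    fun t ht => (hupd t ht).trans (polyakStep_eq_ite ..).symm
  have hxR : ∀ t ∈ Finset.Icc 1 T, x t ∈ Metric.closedBall 0 R := by
    simpa using norm_le_of_polyakStep hR (by simpa using hx1) hstep
  have hyx : ∀ t ∈ Finset.Icc 1 T, ‖y t - x t‖ ≤ η * Gf := by
    intro t ht
    rw [hy t ht, sub_sub_cancel_left, norm_neg, norm_smul, Real.norm_of_nonneg hη]
    gcongr
    exact hA2 t ht _ (hxR t ht)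
  have hmain := mul_sum_le_of_polyakStep hgconv hR hGg hσ hρ hρε hA1 hA3 hA4ne hA4
    (by simpa using hx1) hs hyx hstep
  have hbudget := initial_add_drift_le_tightening hGf hGg hε hξ hrT hTlarge
  rw [Real.sq_sqrt T.cast_nonneg, ← hηdef, ← hρdef] at hbudget
  exact nonpos_of_mul_nonpos_right (hmain.trans (sub_nonpos.2 hbudget)) hξ

theorem stmt6 {d T : ℕ}
    {R Gf Gg ε σ η ρ : ℝ}
    (g : EuclideanSpace ℝ (Fin d) → ℝ)
    (f : ℕ → EuclideanSpace ℝ (Fin d) → ℝ)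
    (x y s : ℕ → EuclideanSpace ℝ (Fin d))
    (hR : 0 < R) (hGf : 0 < Gf) (hGg : 0 < Gg)
    (hgconv : ConvexOn ℝ Set.univ g)
    (hA1 : {z : EuclideanSpace ℝ (Fin d) | g z ≤ 0} ⊆ Metric.closedBall 0 R)
    (hfconv : ∀ t ∈ Finset.Icc 1 T, ConvexOn ℝ Set.univ (f t))
    (hfdiff : ∀ t ∈ Finset.Icc 1 T, Differentiable ℝ (f t))
    (hA2 : ∀ t ∈ Finset.Icc 1 T, ∀ z ∈ Metric.closedBall (0 : EuclideanSpace ℝ (Fin d)) R,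
      ‖gradient (f t) z‖ ≤ Gf)
    (hA3 : ∀ z ∈ Metric.closedBall (0 : EuclideanSpace ℝ (Fin d)) R,
      ∀ sz, IsSubgradAt g z sz → ‖sz‖ ≤ Gg)
    (hσ : 0 < σ) (hε : 0 < ε) (hσGg : σ ≤ Gg)
    (hA4ne : ∃ z, g z = -ε)
    (hA4 : ∀ z : EuclideanSpace ℝ (Fin d), g z = -ε → ∀ sz, IsSubgradAt g z sz → σ ≤ ‖sz‖)
    (hx1 : x 1 ∈ Metric.closedBall (0 : EuclideanSpace ℝ (Fin d)) R)
    (hηdef : η = (1 - Real.sqrt (1 - σ ^ 2 / Gg ^ 2)) * ε / (2 * Gf * Gg * Real.sqrt T))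
    (hρdef : ρ = ε / Real.sqrt T)
    (hTlarge : 4 * R * Gg / (ε * (1 - Real.sqrt (1 - σ ^ 2 / Gg ^ 2))) ≤ Real.sqrt T)
    (hs : ∀ t ∈ Finset.Icc 1 T, IsSubgradAt g (x t) (s t))
    (hy : ∀ t ∈ Finset.Icc 1 T, y t = x t - η • gradient (f t) (x t))
    (hupd : ∀ t ∈ Finset.Icc 1 T,
      x (t + 1) = if s t ≠ 0 then
          projBall R (y t - ((max (g (x t) + ⟪s t, y t - x t⟫ + ρ) 0) / ‖s t‖ ^ 2) • s t)
        else projBall R (y t))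
    :
    ∑ t ∈ Finset.Icc 1 T, g (x t) ≤ 0 :=
  stmt6_general g (fun t => gradient (f t)) x y s hR hGf hGg hgconv hA1 hA2 hA3 hσ hε hA4ne hA4 hx1
    hηdef hρdef hTlarge hs hy hupd
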